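/- Let θ ∈ (0, 1/2) and q ∈ [0, 1/2). Let P = P_{T,θ} on {0,1}³ for the tree T with edge set {{1,2},{2,3}}, let P^{(q)} be its noisy version, and let y_1,…,y_n be i.i.d. samples from P^{(q)} with empirical agreement weights Â^{(q)}_{i,j}. Define β₁ := ((1−q)³+q³)·θ(1−θ)/2 + q(1−q)·(1−θ(1−θ))/2, β₂ := ((1−q)³+q³)·θ²/2 + q(1−q)·(1−θ²)/2, K^{(q)} := −log(1 − 4·((β₁+β₂)/2 − √(β₁β₂))), μ₂ := 4√(β₁β₂)·e^{K^{(q)}}, z := √(β₂/β₁), f̃^{(q)}(n) := (e^{−n·K^{(q)}}/√(2πμ₂n))·[1 + (1−3μ₂)/(8μ₂n)], and f^{(q)}(n) := (f̃^{(q)}(n)/(1−z))·[1 − z(1+z)/(2(1−z)²μ₂n)]. Then ℙ(Â^{(q)}_{1,3} = Â^{(q)}_{1,2}) = f̃^{(q)}(n)·(1 + o(n^{−1})) and ℙ(Â^{(q)}_{1,3} ≥ Â^{(q)}_{1,2}) = f^{(q)}(n)·(1 + o(n^{−1})); that is, n·( ℙ(Â^{(q)}_{1,3} = Â^{(q)}_{1,2})/f̃^{(q)}(n)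 − 1 ) → 0 and n·( ℙ(Â^{(q)}_{1,3} ≥ Â^{(q)}_{1,2})/f^{(q)}(n) − 1 ) → 0 as n → ∞. -/

import Mathlib

open scoped Classical BigOperators
open Filter

noncomputable section

/-- Symmetric pair weight `w(x i, x j)` lifted to unordered pairs. -/
def pairWeight (θ : ℝ) {p : ℕ} (x : Fin p → Bool) : Sym2 (Fin p) → ℝ :=
  Sym2.lift ⟨fun i j => if x i = x j then 1 - θ else θ, fun i j => by
    dsimp only
    by_cases h : x i = x j
    · rw [if_pos h, if_pos h.symm]
    · rw [if_neg h, if_neg (fun hh => h hh.symm)]⟩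

/-- The homogeneous zero-external-field Ising tree distribution. -/
def isingP (θ : ℝ) {p : ℕ} (T : SimpleGraph (Fin p)) (x : Fin p → Bool) : ℝ :=
  (1 / 2) * ∏ e ∈ T.edgeFinset, pairWeight θ x e

/-- Probability of an event `A` about `n` i.i.d. samples from pmf `P`. -/
def iidProb {p : ℕ} (P : (Fin p → Bool) → ℝ) (n : ℕ)
    (A : Set (Fin n → Fin p → Bool)) : ℝ :=
  ∑ xs : Fin n → Fin p → Bool, if xs ∈ A then ∏ k, P (xs k) else 0

/-- Empirical agreement weight. -/
def Ahat {p n : ℕ} (xs : Fin n → Fin p → Bool) (i j : Fin p) : ℝ :=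
  ((Finset.univ.filter (fun k : Fin n => xs k i = xs k j)).card : ℝ) / n

/-- Empirical agreement weight on unordered pairs. -/
def AhatSym {p n : ℕ} (xs : Fin n → Fin p → Bool) : Sym2 (Fin p) → ℝ :=
  Sym2.lift ⟨fun i j => Ahat xs i j, fun i j => by
    have h : (Finset.univ.filter fun k : Fin n => xs k i = xs k j)
        = (Finset.univ.filter fun k : Fin n => xs k j = xs k i) :=
      Finset.filter_congr (fun k _ => ⟨Eq.symm, Eq.symm⟩)
    simp only [Ahat, h]⟩

/-- The path (Markov chain) tree on 3 nodes with edges {1,2},{2,3}. -/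
def chainA : SimpleGraph (Fin 3) := SimpleGraph.fromEdgeSet {s(0,1), s(1,2)}

def chainB : SimpleGraph (Fin 3) := SimpleGraph.fromEdgeSet {s(0,2), s(1,2)}

def chainC : SimpleGraph (Fin 3) := SimpleGraph.fromEdgeSet {s(0,1), s(0,2)}

def path4 : SimpleGraph (Fin 4) := SimpleGraph.fromEdgeSet {s(0,1), s(1,2), s(2,3)}

def Kexp (θ : ℝ) : ℝ := -Real.log (1 - θ * (1 - Real.sqrt (4 * θ * (1 - θ))))

def sigmaSq (θ : ℝ) : ℝ := θ * Real.sqrt (4 * θ * (1 - θ)) * Real.exp (Kexp θ)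

def zTheta (θ : ℝ) : ℝ := Real.sqrt (θ / (1 - θ))

def ftilde (θ : ℝ) (n : ℕ) : ℝ :=
  Real.exp (-(n : ℝ) * Kexp θ) / Real.sqrt (2 * Real.pi * sigmaSq θ * n)
    * (1 + (1 - 3 * sigmaSq θ) / (8 * sigmaSq θ * n))

def fn (θ : ℝ) (n : ℕ) : ℝ :=
  ftilde θ n / (1 - zTheta θ)
    * (1 - zTheta θ * (1 + zTheta θ) / (2 * (1 - zTheta θ) ^ 2 * sigmaSq θ * n))

/-- Hamming distance. -/
def hamming {p : ℕ} (x y : Fin p → Bool) : ℕ :=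
  (Finset.univ.filter (fun i => x i ≠ y i)).card

/-- Noisy (BSC with crossover probability q) version of a distribution. -/
def noisy (q : ℝ) {p : ℕ} (P : (Fin p → Bool) → ℝ) (y : Fin p → Bool) : ℝ :=
  ∑ x : Fin p → Bool, q ^ hamming x y * (1 - q) ^ (p - hamming x y) * P x

def beta1 (θ q : ℝ) : ℝ :=
  ((1 - q) ^ 3 + q ^ 3) * (θ * (1 - θ) / 2) + q * (1 - q) * ((1 - θ * (1 - θ)) / 2)

def beta2 (θ q : ℝ) : ℝ :=
  ((1 - q) ^ 3 + q ^ 3) * (θ ^ 2 / 2) + q * (1 - q) * ((1 - θ ^ 2) / 2)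

def Kq (θ q : ℝ) : ℝ :=
  -Real.log (1 - 4 * ((beta1 θ q + beta2 θ q) / 2 - Real.sqrt (beta1 θ q * beta2 θ q)))

def mu2 (θ q : ℝ) : ℝ := 4 * Real.sqrt (beta1 θ q * beta2 θ q) * Real.exp (Kq θ q)

def zq (θ q : ℝ) : ℝ := Real.sqrt (beta2 θ q / beta1 θ q)

def ftildeq (θ q : ℝ) (n : ℕ) : ℝ :=
  Real.exp (-(n : ℝ) * Kq θ q) / Real.sqrt (2 * Real.pi * mu2 θ q * n)
    * (1 + (1 - 3 * mu2 θ q) / (8 * mu2 θ q * n))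

def fnq (θ q : ℝ) (n : ℕ) : ℝ :=
  ftildeq θ q n / (1 - zq θ q)
    * (1 - zq θ q * (1 + zq θ q) / (2 * (1 - zq θ q) ^ 2 * mu2 θ q * n))

/-- Marginal of a pmf on `{0,1}^p` on a single coordinate. -/
def marg1 {p : ℕ} (Q : (Fin p → Bool) → ℝ) (i : Fin p) (a : Bool) : ℝ :=
  ∑ x ∈ Finset.univ.filter (fun x : Fin p → Bool => x i = a), Q x

/-- Marginal of a pmf on `{0,1}^p` on a pair of coordinates. -/
def marg2 {p : ℕ} (Q : (Fin p → Bool) → ℝ) (i j : Fin p) (a b : Bool) : ℝ :=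
  ∑ x ∈ Finset.univ.filter (fun x : Fin p → Bool => x i = a ∧ x j = b), Q x

/-- Kullback-Leibler divergence between pmfs on a finite type. -/
def klDiv {X : Type*} [Fintype X] (Q P : X → ℝ) : ℝ :=
  ∑ x : X, Q x * Real.log (Q x / P x)

/-- Empirical mutual information between coordinates `i` and `j`. -/
def mutInf {p : ℕ} (Q : (Fin p → Bool) → ℝ) (i j : Fin p) : ℝ :=
  ∑ a : Bool, ∑ b : Bool,
    marg2 Q i j a b * Real.log (marg2 Q i j a b / (marg1 Q i a * marg1 Q j b))

end

/-!
Each sample moves `n (Â₁₃ - Â₁₂)` by a step in `{-1, 0, 1}`, equal to `-1` and to `1` with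
probabilities `2β₁` and `2β₂`. Tilting this step by `z = √(β₂ / β₁)` equalises the two
probabilities: on the circle `|u| = z⁻¹` its generating function is `e^{-K} (1 - μ₂ + μ₂ cos t)`,
the characteristic function of a lazy symmetric walk times the total mass `e^{-K}`. By Fourier
inversion on that circle the probability that the `n` steps add up to `k` is
`e^{-nK} z ^ k / (2π)` times the integral of `(1 - μ₂ + μ₂ cos t) ^ n cos (k t)` over `(-π, π]`.
For the crossover event, sum over `k ≥ 0`: this only replaces the factor `1` in the integral for
`k = 0` by `∑ z ^ k cos (k t)`. Both integrals are expanded to relative order `1 / n` by Laplace's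
method, in which the quartic term of the characteristic function gives `(1 - 3μ₂) / (8μ₂)` and the
quadratic term of the second factor gives `-z (1 + z) / (2 (1 - z)² μ₂)`.
-/

section

open Real MeasureTheory Topology

lemma tendsto_of_tendsto_natCast_mul_sub {B : ℕ → ℝ} {b c : ℝ}
    (h : Tendsto (fun n : ℕ => (n : ℝ) * (B n - b)) atTop (𝓝 c)) : Tendsto B atTop (𝓝 b) := by
  rw [← tendsto_sub_nhds_zero_iff]
  refine (h.div_atTop tendsto_natCast_atTop_atTop).congr' ?_
  filter_upwards [eventually_ne_atTop 0] with n hn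
  rw [mul_div_cancel_left₀ _ (Nat.cast_ne_zero.mpr hn)]

lemma tendsto_natCast_mul_div_sub_one {B D : ℕ → ℝ} {c : ℝ}
    (hB : Tendsto (fun n : ℕ => (n : ℝ) * (B n - 1)) atTop (𝓝 c))
    (hD : Tendsto (fun n : ℕ => (n : ℝ) * (D n - 1)) atTop (𝓝 c)) :
    Tendsto (fun n : ℕ => (n : ℝ) * (B n / D n - 1)) atTop (𝓝 0) := by
  have hD_one : Tendsto D atTop (𝓝 1) := tendsto_of_tendsto_natCast_mul_sub hD
  have hquot := (hB.sub hD).div hD_one one_ne_zero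
  rw [sub_self, zero_div] at hquot
  refine hquot.congr' ?_
  filter_upwards [hD_one.eventually_ne one_ne_zero] with n hn
  simp only [Pi.div_apply]
  field_simp
  ring

lemma tendsto_natCast_mul_one_add_pow_sub_one {v : ℕ → ℝ} {L : ℝ}
    (hv : Tendsto (fun n : ℕ => (n : ℝ) ^ 2 * v n) atTop (𝓝 L)) :
    Tendsto (fun n : ℕ => (n : ℝ) * ((1 + v n) ^ n - 1)) atTop (𝓝 L) := by
  have hnv : Tendsto (fun n : ℕ => (n : ℝ) * v n) atTop (𝓝 0) := by
    refine tendsto_of_tendsto_natCast_mul_sub (hv.congr fun n => ?_)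
    ring
  have hv_zero : Tendsto v atTop (𝓝 0) := by
    refine tendsto_of_tendsto_natCast_mul_sub (hnv.congr fun n => ?_)
    ring
  have hupper : Tendsto (fun n : ℕ => (n : ℝ) ^ 2 * v n / (1 - n * v n)) atTop (𝓝 L) := by
    simpa [Pi.div_def] using hv.div (hnv.const_sub 1) (by norm_num)
  refine tendsto_of_tendsto_of_tendsto_of_le_of_le' hv hupper ?_ ?_
  · filter_upwards [hv_zero.eventually_const_lt (show (-2 : ℝ) < 0 by norm_num)] with n hn
    have bernoulli : 1 + n * v n ≤ (1 + v n) ^ n := one_add_mul_le_pow hn.le n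
    nlinarith [(Nat.cast_nonneg n : (0 : ℝ) ≤ n)]
  · filter_upwards [hv_zero.eventually_const_lt (show (-1 : ℝ) < 0 by norm_num),
      hnv.eventually_lt_const one_pos] with n hn hlt
    have hpow : (1 + v n) ^ n ≤ (1 - n * v n)⁻¹ :=
      calc (1 + v n) ^ n ≤ exp (v n) ^ n := by
            gcongr
            · linarith
            · linarith [add_one_le_exp (v n)]
        _ = (exp (-(n * v n)))⁻¹ := by rw [← exp_neg, neg_neg, exp_nat_mul]
        _ ≤ (1 - n * v n)⁻¹ := inv_anti₀ (by linarith) (one_sub_le_exp_neg _)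
    calc (n : ℝ) * ((1 + v n) ^ n - 1) ≤ n * ((1 - n * v n)⁻¹ - 1) := by gcongr
      _ = (n : ℝ) ^ 2 * v n / (1 - n * v n) := by
          have : 1 - n * v n ≠ 0 := by linarith
          field_simp
          ring

section SmallArgument

variable {f : ℝ → ℝ} {L : ℝ} {m : ℕ}

lemma eq_zero_of_tendsto_div_pow (hf : Continuous f) (hm : m ≠ 0)
    (hlim : Tendsto (fun t => f t / t ^ m) (𝓝[≠] 0) (𝓝 L)) : f 0 = 0 := by
  have hpow : Tendsto (fun t : ℝ => t ^ m) (𝓝[≠] 0) (𝓝 0) :=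
    ((continuous_pow m).tendsto' 0 0 (zero_pow hm)).mono_left nhdsWithin_le_nhds
  have hmul := hlim.mul hpow
  rw [mul_zero] at hmul
  refine tendsto_nhds_unique ((hf.tendsto 0).mono_left nhdsWithin_le_nhds) (hmul.congr' ?_)
  filter_upwards [self_mem_nhdsWithin] with t ht
  exact div_mul_cancel₀ _ (pow_ne_zero m ht)

lemma exists_abs_le_mul_abs_pow_of_tendsto_div_pow (hf : Continuous f) (hm : m ≠ 0)
    (hlim : Tendsto (fun t => f t / t ^ m) (𝓝[≠] 0) (𝓝 L)) {K : Set ℝ} (hK : IsCompact K) :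
    ∃ C ≥ 0, ∀ t ∈ K, |f t| ≤ C * |t| ^ m := by
  have hcont : Continuous (Function.update (fun t => f t / t ^ m) 0 L) := by
    refine continuous_iff_continuousAt.mpr fun t => ?_
    rcases eq_or_ne t 0 with rfl | ht
    · exact continuousAt_update_same.mpr hlim
    · exact (continuousAt_update_of_ne ht).mpr
        (hf.continuousAt.div (continuous_pow m).continuousAt (pow_ne_zero m ht))
  obtain ⟨C, hC⟩ := hK.exists_bound_of_continuousOn hcont.continuousOn
  refine ⟨|C|, abs_nonneg C, fun t ht => ?_⟩
  rcases eq_or_ne t 0 with rfl | ht0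
  · simp [eq_zero_of_tendsto_div_pow hf hm hlim, hm]
  · have hquot := (hC t ht).trans (le_abs_self C)
    rwa [Function.update_of_ne ht0, norm_eq_abs, abs_div, abs_pow,
      div_le_iff₀ (by positivity)] at hquot

lemma tendsto_sqrt_pow_mul_comp_div_sqrt (hf : Continuous f) (hm : m ≠ 0)
    (hlim : Tendsto (fun t => f t / t ^ m) (𝓝[≠] 0) (𝓝 L)) (s : ℝ) :
    Tendsto (fun n : ℕ => √(n : ℝ) ^ m * f (s / √n)) atTop (𝓝 (L * s ^ m)) := by
  rcases eq_or_ne s 0 with rfl | hs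
  · simp [eq_zero_of_tendsto_div_pow hf hm hlim, hm]
  have hsqrt : ∀ᶠ n : ℕ in atTop, √(n : ℝ) ≠ 0 := by
    filter_upwards [eventually_gt_atTop 0] with n hn
    positivity
  have hscale : Tendsto (fun n : ℕ => s / √(n : ℝ)) atTop (𝓝[≠] 0) :=
    tendsto_nhdsWithin_of_tendsto_nhds_of_eventually_within _
      ((tendsto_sqrt_atTop.comp tendsto_natCast_atTop_atTop).const_div_atTop s)
      (hsqrt.mono fun n hn => div_ne_zero hs hn)
  refine ((hlim.comp hscale).mul_const (s ^ m)).congr' ?_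
  filter_upwards [hsqrt] with n hn
  simp only [Function.comp_apply, div_pow]
  field_simp

end SmallArgument

section GaussianMoments

variable {b : ℝ}

lemma integrable_pow_mul_exp_neg_mul_sq (hb : 0 < b) (m : ℕ) :
    Integrable fun x : ℝ => x ^ m * exp (-b * x ^ 2) := by
  have hm : (-1 : ℝ) < m := neg_one_lt_zero.trans_le m.cast_nonneg
  simpa using integrable_rpow_mul_exp_neg_mul_sq hb hm

lemma integral_pow_add_two_mul_exp_neg_mul_sq (hb : 0 < b) (m : ℕ) :
    ∫ x : ℝ, x ^ (m + 2) * exp (-b * x ^ 2) =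
      (m + 1) / (2 * b) * ∫ x : ℝ, x ^ m * exp (-b * x ^ 2) := by
  have hderiv (x : ℝ) : HasDerivAt (fun x : ℝ => x ^ (m + 1) * exp (-b * x ^ 2))
      ((m + 1) * (x ^ m * exp (-b * x ^ 2)) - 2 * b * (x ^ (m + 2) * exp (-b * x ^ 2))) x := by
    refine ((hasDerivAt_pow (m + 1) x).mul
      ((hasDerivAt_pow 2 x).const_mul (-b)).exp).congr_deriv ?_
    push_cast
    ring
  have hint (k : ℕ) (r : ℝ) := (integrable_pow_mul_exp_neg_mul_sq hb k).const_mul r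
  have hzero := integral_eq_zero_of_hasDerivAt_of_integrable hderiv
    ((hint m _).sub (hint (m + 2) _)) (integrable_pow_mul_exp_neg_mul_sq hb (m + 1))
  rw [integral_sub (hint m _) (hint (m + 2) _), integral_const_mul, integral_const_mul] at hzero
  rw [div_mul_eq_mul_div, eq_div_iff (by positivity)]
  linarith

lemma integral_sq_mul_exp_neg_mul_sq (hb : 0 < b) :
    ∫ x : ℝ, x ^ 2 * exp (-b * x ^ 2) = 1 / (2 * b) * √(π / b) := by
  rw [integral_pow_add_two_mul_exp_neg_mul_sq hb 0]
  simp only [Nat.cast_zero, zero_add, pow_zero, one_mul, integral_gaussian]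

lemma integral_pow_four_mul_exp_neg_mul_sq (hb : 0 < b) :
    ∫ x : ℝ, x ^ 4 * exp (-b * x ^ 2) = 3 / (4 * b ^ 2) * √(π / b) := by
  rw [integral_pow_add_two_mul_exp_neg_mul_sq hb 2, integral_sq_mul_exp_neg_mul_sq hb]
  push_cast
  field_simp
  ring

end GaussianMoments

section LaplaceMethod

/-- The interval `(-a, a]` in the variable `s = √n t`, in which Laplace's method is carried out. -/
def rescaledInterval (a : ℝ) (n : ℕ) : Set ℝ := Set.Ioc (-(a * √n)) (a * √n)

variable {φ g : ℝ → ℝ} {a c σ κ γ : ℝ} {n : ℕ} {s : ℝ}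

lemma sqrt_mul_integral_eq_integral_indicator (G : ℝ → ℝ) (ha : 0 ≤ a) (hn : 0 < n) :
    √n * ∫ t in -a..a, G t = ∫ s, (rescaledInterval a n).indicator (fun s => G (s / √n)) s := by
  have hsqrt : 0 < √(n : ℝ) := by positivity
  have hneg : -(a * √n) / √n = -a := by field_simp
  rw [rescaledInterval, integral_indicator measurableSet_Ioc,
    ← intervalIntegral.integral_of_le (by linarith [mul_nonneg ha hsqrt.le]),
    intervalIntegral.integral_comp_div _ hsqrt.ne', smul_eq_mul, hneg,
    mul_div_cancel_right₀ _ hsqrt.ne']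

lemma div_sqrt_mem_Icc_of_mem_rescaledInterval (hn : 0 < n) (hs : s ∈ rescaledInterval a n) :
    s / √n ∈ Set.Icc (-a) a := by
  have hsqrt : 0 < √(n : ℝ) := by positivity
  rw [Set.mem_Icc, le_div_iff₀ hsqrt, div_le_iff₀ hsqrt, neg_mul]
  exact ⟨hs.1.le, hs.2⟩

lemma natCast_le_sq_div_of_notMem_rescaledInterval (ha : 0 < a) (hs : s ∉ rescaledInterval a n) :
    (n : ℝ) ≤ s ^ 2 / a ^ 2 := by
  have habs : a * √n ≤ |s| := by
    by_contra! hlt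
    exact hs ⟨(abs_lt.mp hlt).1, (abs_lt.mp hlt).2.le⟩
  rw [le_div_iff₀ (by positivity)]
  calc (n : ℝ) * a ^ 2 = (a * √n) ^ 2 := by rw [mul_pow, sq_sqrt n.cast_nonneg, mul_comm]
    _ ≤ |s| ^ 2 := by gcongr
    _ = s ^ 2 := sq_abs s

lemma eventually_mem_rescaledInterval (ha : 0 < a) (s : ℝ) :
    ∀ᶠ n : ℕ in atTop, s ∈ rescaledInterval a n := by
  filter_upwards [tendsto_natCast_atTop_atTop.eventually_gt_atTop (s ^ 2 / a ^ 2)] with n hn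
  by_contra hs
  exact hn.not_ge (natCast_le_sq_div_of_notMem_rescaledInterval ha hs)

lemma exp_neg_mul_div_sqrt_sq_pow (b s : ℝ) (hn : 0 < n) :
    exp (-b * (s / √n) ^ 2) ^ n = exp (-b * s ^ 2) := by
  rw [← exp_nat_mul, div_pow, sq_sqrt n.cast_nonneg]
  congr 1
  field_simp

lemma tendsto_natCast_mul_rescaled_pow_sub_exp (hφ : Continuous φ)
    (hφ4 : Tendsto (fun t => (φ t - exp (-(σ / 2) * t ^ 2)) / t ^ 4) (𝓝[≠] 0) (𝓝 κ)) (s : ℝ) :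
    Tendsto (fun n : ℕ => (n : ℝ) * (φ (s / √n) ^ n - exp (-(σ / 2) * s ^ 2))) atTop
      (𝓝 (κ * s ^ 4 * exp (-(σ / 2) * s ^ 2))) := by
  let ψ : ℝ → ℝ := fun t => exp (-(σ / 2) * t ^ 2)
  have hψ : Continuous ψ := by fun_prop
  have hψ_inv : Tendsto (fun n : ℕ => (ψ (s / √n))⁻¹) atTop (𝓝 1) := by
    have h := (hψ.tendsto 0).comp
      ((tendsto_sqrt_atTop.comp tendsto_natCast_atTop_atTop).const_div_atTop s)
    simpa [ψ, Function.comp_def] using h.inv₀ (exp_pos _).ne'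
  have hrel : Tendsto (fun n : ℕ => (n : ℝ) ^ 2 * ((φ (s / √n) - ψ (s / √n)) * (ψ (s / √n))⁻¹))
      atTop (𝓝 (κ * s ^ 4)) := by
    have h := (tendsto_sqrt_pow_mul_comp_div_sqrt (hφ.sub hψ) four_ne_zero hφ4 s).mul hψ_inv
    rw [mul_one] at h
    refine h.congr fun n => ?_
    rw [mul_assoc, show √(n : ℝ) ^ 4 = (√(n : ℝ) ^ 2) ^ 2 by ring, sq_sqrt n.cast_nonneg]
    rfl
  refine ((tendsto_natCast_mul_one_add_pow_sub_one hrel).mul_const _).congr' ?_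
  filter_upwards [eventually_gt_atTop 0] with n hn
  have hψ_ne : ψ (s / √n) ≠ 0 := (exp_pos _).ne'
  have hfactor : 1 + (φ (s / √n) - ψ (s / √n)) * (ψ (s / √n))⁻¹ = φ (s / √n) / ψ (s / √n) := by
    field_simp
    ring
  rw [hfactor, ← exp_neg_mul_div_sqrt_sq_pow (σ / 2) s hn, div_pow, mul_assoc, sub_mul,
    div_mul_cancel₀ _ (pow_ne_zero n hψ_ne), one_mul]

lemma tendsto_rescaled_laplace_integrand (hφ : Continuous φ) (hg : Continuous g)
    (hφ4 : Tendsto (fun t => (φ t - exp (-(σ / 2) * t ^ 2)) / t ^ 4) (𝓝[≠] 0) (𝓝 κ))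
    (hg2 : Tendsto (fun t => (g t - g 0) / t ^ 2) (𝓝[≠] 0) (𝓝 γ)) (s : ℝ) :
    Tendsto (fun n : ℕ => (n : ℝ) * (φ (s / √n) ^ n * g (s / √n) - exp (-(σ / 2) * s ^ 2) * g 0))
      atTop (𝓝 (γ * (s ^ 2 * exp (-(σ / 2) * s ^ 2)) +
        κ * g 0 * (s ^ 4 * exp (-(σ / 2) * s ^ 2)))) := by
  have hpow := tendsto_natCast_mul_rescaled_pow_sub_exp hφ hφ4 s
  have hg_incr := tendsto_sqrt_pow_mul_comp_div_sqrt (hg.sub continuous_const) two_ne_zero hg2 s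
  convert ((hg_incr.mul (tendsto_of_tendsto_natCast_mul_sub hpow)).add
    (hpow.mul_const (g 0))).congr fun n => ?_ using 2
  · ring
  · rw [sq_sqrt n.cast_nonneg, Pi.sub_apply]
    ring

lemma natCast_mul_abs_pow_sub_pow_le {x y t C : ℝ} (hc : 0 ≤ c) (hn : 2 ≤ n)
    (hx : |x| ≤ exp (-c * t ^ 2)) (hy : |y| ≤ exp (-c * t ^ 2)) (hxy : |x - y| ≤ C * t ^ 4) :
    n * |x ^ n - y ^ n| ≤ C * (n * t ^ 2) ^ 2 * exp (-(c / 2) * (n * t ^ 2)) := by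
  have hn2 : (2 : ℝ) ≤ n := by exact_mod_cast hn
  have hmax : max |x| |y| ^ (n - 1) ≤ exp (-(c / 2) * (n * t ^ 2)) :=
    calc max |x| |y| ^ (n - 1) ≤ exp (-c * t ^ 2) ^ (n - 1) := by
          gcongr
          exact max_le hx hy
      _ = exp ((n - 1) * (-c * t ^ 2)) := by
          rw [← exp_nat_mul, Nat.cast_sub (by omega), Nat.cast_one]
      _ ≤ exp (-(c / 2) * (n * t ^ 2)) :=
          exp_le_exp.mpr (by nlinarith [mul_nonneg hc (sq_nonneg t)])
  calc n * |x ^ n - y ^ n| ≤ n * (|x - y| * n * max |x| |y| ^ (n - 1)) := by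
        gcongr
        exact abs_pow_sub_pow_le x y n
    _ ≤ n * (C * t ^ 4 * n * exp (-(c / 2) * (n * t ^ 2))) := by
        have := (abs_nonneg _).trans hxy
        gcongr
    _ = C * (n * t ^ 2) ^ 2 * exp (-(c / 2) * (n * t ^ 2)) := by ring

lemma abs_rescaled_laplace_integrand_le {Cφ Cg : ℝ} (hc : 0 ≤ c) (hcσ : c ≤ σ / 2) (hn : 2 ≤ n)
    (hs : s / √n ∈ Set.Icc (-a) a)
    (hφ_le : ∀ t ∈ Set.Icc (-a) a, |φ t| ≤ exp (-c * t ^ 2))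
    (hφ_sub : ∀ t ∈ Set.Icc (-a) a, |φ t - exp (-(σ / 2) * t ^ 2)| ≤ Cφ * |t| ^ 4)
    (hg_sub : ∀ t ∈ Set.Icc (-a) a, |g t - g 0| ≤ Cg * |t| ^ 2) :
    |(n : ℝ) * (φ (s / √n) ^ n * g (s / √n) - exp (-(σ / 2) * s ^ 2) * g 0)| ≤
      Cg * (s ^ 2 * exp (-(c / 2) * s ^ 2)) + Cφ * |g 0| * (s ^ 4 * exp (-(c / 2) * s ^ 2)) := by
  have hn0 : 0 < n := by omega
  have hsq : n * (s / √n) ^ 2 = s ^ 2 := by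
    rw [div_pow, sq_sqrt n.cast_nonneg]
    field_simp
  rw [← exp_neg_mul_div_sqrt_sq_pow (σ / 2) s hn0]
  set t := s / √n
  have hφt := hφ_le t hs
  have hφ_pow : |φ t| ^ n ≤ exp (-(c / 2) * s ^ 2) :=
    calc |φ t| ^ n ≤ exp (-c * t ^ 2) ^ n := by gcongr
      _ = exp (-c * s ^ 2) := exp_neg_mul_div_sqrt_sq_pow c s hn0
      _ ≤ exp (-(c / 2) * s ^ 2) := by
          gcongr
          linarith
  have hgauss_le : |exp (-(σ / 2) * t ^ 2)| ≤ exp (-c * t ^ 2) := by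
    rw [abs_of_pos (exp_pos _)]
    gcongr
  have hpow_sub := natCast_mul_abs_pow_sub_pow_le hc hn hφt hgauss_le
    (by simpa only [Even.pow_abs (show Even 4 by decide)] using hφ_sub t hs)
  rw [hsq] at hpow_sub
  have hgt := hg_sub t hs
  have : 0 ≤ Cg * |t| ^ 2 := (abs_nonneg _).trans hgt
  calc |(n : ℝ) * (φ t ^ n * g t - exp (-(σ / 2) * t ^ 2) ^ n * g 0)|
      = |n * (φ t ^ n * (g t - g 0)) + n * (φ t ^ n - exp (-(σ / 2) * t ^ 2) ^ n) * g 0| := by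
        congr 1
        ring
    _ ≤ n * (|φ t| ^ n * |g t - g 0|) + n * |φ t ^ n - exp (-(σ / 2) * t ^ 2) ^ n| * |g 0| := by
        refine (abs_add_le _ _).trans_eq ?_
        simp only [abs_mul, abs_pow, Nat.abs_cast]
    _ ≤ n * (exp (-(c / 2) * s ^ 2) * (Cg * |t| ^ 2)) +
          Cφ * (s ^ 2) ^ 2 * exp (-(c / 2) * s ^ 2) * |g 0| := by gcongr
    _ = Cg * (s ^ 2 * exp (-(c / 2) * s ^ 2)) + Cφ * |g 0| * (s ^ 4 * exp (-(c / 2) * s ^ 2)) := by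
        rw [sq_abs]
        linear_combination (exp (-(c / 2) * s ^ 2) * Cg) * hsq

lemma natCast_mul_exp_neg_mul_sq_le (ha : 0 < a) (hc : 0 ≤ c) (hcσ : c ≤ σ / 2)
    (hs : s ∉ rescaledInterval a n) :
    n * exp (-(σ / 2) * s ^ 2) ≤ (a ^ 2)⁻¹ * (s ^ 2 * exp (-(c / 2) * s ^ 2)) :=
  calc n * exp (-(σ / 2) * s ^ 2) ≤ s ^ 2 / a ^ 2 * exp (-(c / 2) * s ^ 2) := by
        gcongr
        · exact natCast_le_sq_div_of_notMem_rescaledInterval ha hs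
        · linarith
    _ = (a ^ 2)⁻¹ * (s ^ 2 * exp (-(c / 2) * s ^ 2)) := by ring

/-- The `n`-th error integrand of Laplace's method: `n` times the difference between the integrand
`φ ^ n * g` over `(-a, a]`, in the variable `s = √n t`, and its Gaussian limit. -/
noncomputable def laplaceError (φ g : ℝ → ℝ) (a σ : ℝ) (n : ℕ) (s : ℝ) : ℝ :=
  n * ((rescaledInterval a n).indicator (fun s => φ (s / √n) ^ n * g (s / √n)) s -
    exp (-(σ / 2) * s ^ 2) * g 0)

lemma integral_laplaceError (hφ : Continuous φ) (hg : Continuous g) (ha : 0 ≤ a) (hσ : 0 < σ)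
    (hn : 0 < n) :
    ∫ s, laplaceError φ g a σ n s =
      n * (√n * (∫ t in -a..a, φ t ^ n * g t) - √(2 * π / σ) * g 0) := by
  have hrescaled : Integrable
      ((rescaledInterval a n).indicator fun s => φ (s / √n) ^ n * g (s / √n)) := by
    refine IntegrableOn.integrable_indicator ?_ measurableSet_Ioc
    exact (Continuous.integrableOn_Icc (by fun_prop)).mono_set Set.Ioc_subset_Icc_self
  have hgauss : Integrable fun s : ℝ => exp (-(σ / 2) * s ^ 2) * g 0 :=
    (integrable_exp_neg_mul_sq (half_pos hσ)).mul_const _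
  simp only [laplaceError]
  rw [integral_const_mul, integral_sub hrescaled hgauss, integral_mul_const, integral_gaussian,
    sqrt_mul_integral_eq_integral_indicator _ ha hn, div_div_eq_mul_div, mul_comm π 2]

lemma tendsto_laplaceError (hφ : Continuous φ) (hg : Continuous g) (ha : 0 < a)
    (hφ4 : Tendsto (fun t => (φ t - exp (-(σ / 2) * t ^ 2)) / t ^ 4) (𝓝[≠] 0) (𝓝 κ))
    (hg2 : Tendsto (fun t => (g t - g 0) / t ^ 2) (𝓝[≠] 0) (𝓝 γ)) (s : ℝ) :
    Tendsto (fun n => laplaceError φ g a σ n s) atTop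
      (𝓝 (γ * (s ^ 2 * exp (-(σ / 2) * s ^ 2)) +
        κ * g 0 * (s ^ 4 * exp (-(σ / 2) * s ^ 2)))) := by
  refine (tendsto_rescaled_laplace_integrand hφ hg hφ4 hg2 s).congr' ?_
  filter_upwards [eventually_mem_rescaledInterval ha s] with n hs
  rw [laplaceError, Set.indicator_of_mem hs]

/-- An integrable majorant of `laplaceError`, uniform in `n`. -/
noncomputable def laplaceMajorant (a c b Cφ Cg s : ℝ) : ℝ :=
  (Cg + b * (a ^ 2)⁻¹) * (s ^ 2 * exp (-(c / 2) * s ^ 2)) +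
    Cφ * b * (s ^ 4 * exp (-(c / 2) * s ^ 2))

lemma integrable_laplaceMajorant (hc : 0 < c) (b Cφ Cg : ℝ) :
    Integrable (laplaceMajorant a c b Cφ Cg) :=
  ((integrable_pow_mul_exp_neg_mul_sq (half_pos hc) 2).const_mul _).add
    ((integrable_pow_mul_exp_neg_mul_sq (half_pos hc) 4).const_mul _)

lemma abs_laplaceError_le_laplaceMajorant {Cφ Cg : ℝ} (ha : 0 < a) (hc : 0 ≤ c) (hcσ : c ≤ σ / 2)
    (hn : 2 ≤ n) (hCφ : 0 ≤ Cφ) (hCg : 0 ≤ Cg)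
    (hφ_le : ∀ t ∈ Set.Icc (-a) a, |φ t| ≤ exp (-c * t ^ 2))
    (hφ_sub : ∀ t ∈ Set.Icc (-a) a, |φ t - exp (-(σ / 2) * t ^ 2)| ≤ Cφ * |t| ^ 4)
    (hg_sub : ∀ t ∈ Set.Icc (-a) a, |g t - g 0| ≤ Cg * |t| ^ 2) (s : ℝ) :
    |laplaceError φ g a σ n s| ≤ laplaceMajorant a c |g 0| Cφ Cg s := by
  have hsq : 0 ≤ s ^ 2 * exp (-(c / 2) * s ^ 2) := by positivity
  have hfour : 0 ≤ Cφ * |g 0| * (s ^ 4 * exp (-(c / 2) * s ^ 2)) := by positivity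
  rw [laplaceError, laplaceMajorant, add_mul]
  by_cases hs : s ∈ rescaledInterval a n
  · have hmid : 0 ≤ |g 0| * (a ^ 2)⁻¹ * (s ^ 2 * exp (-(c / 2) * s ^ 2)) := by positivity
    have hin := abs_rescaled_laplace_integrand_le hc hcσ hn
      (div_sqrt_mem_Icc_of_mem_rescaledInterval (by omega) hs) hφ_le hφ_sub hg_sub
    rw [Set.indicator_of_mem hs]
    linarith
  · have hout := natCast_mul_exp_neg_mul_sq_le ha hc hcσ hs
    have habs : |n * (0 - exp (-(σ / 2) * s ^ 2) * g 0)| =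
        |g 0| * (n * exp (-(σ / 2) * s ^ 2)) := by
      rw [zero_sub, mul_neg, abs_neg, abs_mul, abs_mul, Nat.abs_cast, abs_of_pos (exp_pos _)]
      ring
    rw [Set.indicator_of_notMem hs, habs]
    linarith [mul_le_mul_of_nonneg_left hout (abs_nonneg (g 0)), mul_nonneg hCg hsq]

lemma integral_laplaceError_limit (hσ : 0 < σ) (b : ℝ) :
    ∫ s : ℝ, (γ * (s ^ 2 * exp (-(σ / 2) * s ^ 2)) + κ * b * (s ^ 4 * exp (-(σ / 2) * s ^ 2))) =
      √(2 * π / σ) * (3 * κ / σ ^ 2 * b + γ / σ) := by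
  have hint (m : ℕ) (r : ℝ) := (integrable_pow_mul_exp_neg_mul_sq (half_pos hσ) m).const_mul r
  rw [integral_add (hint 2 γ) (hint 4 (κ * b)), integral_const_mul, integral_const_mul,
    integral_sq_mul_exp_neg_mul_sq (half_pos hσ),
    integral_pow_four_mul_exp_neg_mul_sq (half_pos hσ), div_div_eq_mul_div, mul_comm π 2]
  field_simp
  ring

theorem tendsto_laplace_second_order (hφ : Continuous φ) (hg : Continuous g) (ha : 0 < a)
    (hc : 0 < c) (hσ : 0 < σ) (hφ_le : ∀ t ∈ Set.Icc (-a) a, |φ t| ≤ exp (-c * t ^ 2))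
    (hφ4 : Tendsto (fun t => (φ t - exp (-(σ / 2) * t ^ 2)) / t ^ 4) (𝓝[≠] 0) (𝓝 κ))
    (hg2 : Tendsto (fun t => (g t - g 0) / t ^ 2) (𝓝[≠] 0) (𝓝 γ)) :
    Tendsto (fun n : ℕ => (n : ℝ) * (√n * (∫ t in -a..a, φ t ^ n * g t) - √(2 * π / σ) * g 0))
      atTop (𝓝 (√(2 * π / σ) * (3 * κ / σ ^ 2 * g 0 + γ / σ))) := by
  have hd : 0 < min c (σ / 2) := lt_min hc (half_pos hσ)
  have hφ_le' (t : ℝ) (ht : t ∈ Set.Icc (-a) a) : |φ t| ≤ exp (-min c (σ / 2) * t ^ 2) :=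
    (hφ_le t ht).trans (by gcongr; exact min_le_left _ _)
  obtain ⟨Cφ, hCφ, hφ_sub⟩ := exists_abs_le_mul_abs_pow_of_tendsto_div_pow
    (f := fun t => φ t - exp (-(σ / 2) * t ^ 2)) (by fun_prop) four_ne_zero hφ4
    (isCompact_Icc (a := -a) (b := a))
  obtain ⟨Cg, hCg, hg_sub⟩ := exists_abs_le_mul_abs_pow_of_tendsto_div_pow
    (f := fun t => g t - g 0) (by fun_prop) two_ne_zero hg2 (isCompact_Icc (a := -a) (b := a))
  have hmeas (n : ℕ) : AEStronglyMeasurable (laplaceError φ g a σ n) := by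
    refine (((Continuous.measurable ?_).indicator measurableSet_Ioc).sub
      (Continuous.measurable ?_)).const_mul _ |>.aestronglyMeasurable <;> fun_prop
  rw [← integral_laplaceError_limit hσ]
  refine (tendsto_integral_filter_of_dominated_convergence _ (.of_forall hmeas) ?_
    (integrable_laplaceMajorant (a := a) hd |g 0| Cφ Cg)
    (.of_forall (tendsto_laplaceError hφ hg ha hφ4 hg2))).congr' ?_
  · filter_upwards [eventually_ge_atTop 2] with n hn
    exact .of_forall (abs_laplaceError_le_laplaceMajorant ha hd.le (min_le_right _ _) hn hCφ hCg
      hφ_le' hφ_sub hg_sub)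
  · filter_upwards [eventually_gt_atTop 0] with n hn
    exact integral_laplaceError hφ hg ha.le hσ hn

end LaplaceMethod

section LazyWalk

/-- The characteristic function of a step of the lazy symmetric walk on `ℤ`, which moves by `±1`
with probability `μ / 2` each. -/
noncomputable def lazyCharFun (μ t : ℝ) : ℝ := 1 - μ + μ * cos t

@[fun_prop]
lemma continuous_lazyCharFun (μ : ℝ) : Continuous (lazyCharFun μ) := by
  unfold lazyCharFun
  fun_prop

variable {μ t : ℝ}

lemma abs_lazyCharFun_le_exp (hμ0 : 0 ≤ μ) (hμ1 : μ ≤ 1) (ht : |t| ≤ π) :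
    |lazyCharFun μ t| ≤ exp (-(2 * μ * (1 - μ) / π ^ 2) * t ^ 2) := by
  refine abs_le_of_sq_le_sq ?_ (exp_pos _).le
  have : 0 ≤ 2 * μ * (1 - μ) := mul_nonneg (by positivity) (by linarith)
  calc lazyCharFun μ t ^ 2
      = 1 - 2 * μ * (1 - μ) * (1 - cos t) - μ ^ 2 * sin t ^ 2 := by
        rw [lazyCharFun, sin_sq]
        ring
    _ ≤ 1 - 2 * μ * (1 - μ) * (1 - cos t) := sub_le_self _ (by positivity)
    _ ≤ 1 - 2 * μ * (1 - μ) * (2 / π ^ 2 * t ^ 2) := by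
        gcongr
        linarith [cos_le_one_sub_mul_cos_sq ht]
    _ ≤ exp (-(2 * μ * (1 - μ) * (2 / π ^ 2 * t ^ 2))) := one_sub_le_exp_neg _
    _ = exp (-(2 * μ * (1 - μ) / π ^ 2) * t ^ 2) ^ 2 := by
        rw [← exp_nat_mul]
        congr 1
        push_cast
        ring

lemma tendsto_cos_sub_taylor_two_div_pow_four :
    Tendsto (fun t => (cos t - 1 + t ^ 2 / 2) / t ^ 4) (𝓝[≠] 0) (𝓝 (1 / 24)) := by
  have htaylor := Real.taylor_tendsto (f := cos) (x₀ := 0) (n := 4) convex_univ (Set.mem_univ _)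
    contDiff_cos.contDiffOn
  rw [nhdsWithin_univ] at htaylor
  have hadd := (htaylor.mono_left (nhdsWithin_le_nhds (s := {0}ᶜ))).add_const (1 / 24)
  rw [zero_add] at hadd
  refine hadd.congr' ?_
  filter_upwards [self_mem_nhdsWithin] with t ht
  replace ht : t ≠ 0 := ht
  simp only [taylorWithinEval_succ, taylor_within_zero_eval, iteratedDerivWithin_univ,
    iteratedDeriv_succ, iteratedDeriv_zero, deriv_cos', deriv.fun_neg', Real.deriv_sin, cos_zero,
    sin_zero, sub_zero, smul_eq_mul, Nat.factorial]
  push_cast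
  field_simp
  ring

lemma tendsto_one_sub_cos_div_sq :
    Tendsto (fun t => (1 - cos t) / t ^ 2) (𝓝[≠] 0) (𝓝 (1 / 2)) := by
  have hsq : Tendsto (fun t : ℝ => t ^ 2) (𝓝[≠] 0) (𝓝 0) :=
    ((continuous_pow 2).tendsto' 0 0 (zero_pow two_ne_zero)).mono_left nhdsWithin_le_nhds
  have hrem := (hsq.mul tendsto_cos_sub_taylor_two_div_pow_four).const_sub (1 / 2)
  rw [zero_mul, sub_zero] at hrem
  refine hrem.congr' ?_
  filter_upwards [self_mem_nhdsWithin] with t ht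
  replace ht : t ≠ 0 := ht
  field_simp
  ring

lemma tendsto_exp_sub_taylor_one_div_sq :
    Tendsto (fun x => (exp x - 1 - x) / x ^ 2) (𝓝[≠] 0) (𝓝 (1 / 2)) := by
  have htaylor := ((exp_sub_sum_range_succ_isLittleO_pow 2).tendsto_div_nhds_zero.mono_left
    (nhdsWithin_le_nhds (s := {0}ᶜ))).add_const (1 / 2)
  rw [zero_add] at htaylor
  refine htaylor.congr' ?_
  filter_upwards [self_mem_nhdsWithin] with x hx
  replace hx : x ≠ 0 := hx
  simp only [Finset.sum_range_succ, Finset.sum_range_zero, Nat.factorial]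
  push_cast
  field_simp
  ring

lemma tendsto_lazyCharFun_sub_exp_div_pow_four (hμ : μ ≠ 0) :
    Tendsto (fun t => (lazyCharFun μ t - exp (-(μ / 2) * t ^ 2)) / t ^ 4) (𝓝[≠] 0)
      (𝓝 (μ / 24 - μ ^ 2 / 8)) := by
  have hne (t : ℝ) (ht : t ≠ 0) : -(μ / 2) * t ^ 2 ≠ 0 :=
    mul_ne_zero (neg_ne_zero.mpr (div_ne_zero hμ two_ne_zero)) (pow_ne_zero 2 ht)
  have hquad : Tendsto (fun t : ℝ => -(μ / 2) * t ^ 2) (𝓝[≠] 0) (𝓝[≠] 0) := by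
    refine tendsto_nhdsWithin_of_tendsto_nhds_of_eventually_within _ ?_
      (eventually_mem_nhdsWithin.mono hne)
    exact (Continuous.tendsto' (by fun_prop) 0 0 (by simp)).mono_left nhdsWithin_le_nhds
  have hcos := tendsto_cos_sub_taylor_two_div_pow_four.const_mul μ
  have hexp := (tendsto_exp_sub_taylor_one_div_sq.comp hquad).const_mul ((μ / 2) ^ 2)
  convert (hcos.sub hexp).congr' ?_ using 2
  · ring
  · filter_upwards [self_mem_nhdsWithin] with t ht
    replace ht : t ≠ 0 := ht
    simp only [Function.comp_apply, lazyCharFun]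
    field_simp
    ring

end LazyWalk

section GeomCosSum

variable {z : ℝ}

/-- The generating function `∑ z ^ k cos (k t)` over `k ≥ 0` in closed form: the weight through
which the events `{S = k}`, `k ≥ 0`, of a tilted walk `S` add up to `{0 ≤ S}`. -/
noncomputable def geomCosSum (z t : ℝ) : ℝ := (1 - z * cos t) / (1 - 2 * z * cos t + z ^ 2)

lemma geomCosSum_denom_pos (hz : |z| < 1) (t : ℝ) : 0 < 1 - 2 * z * cos t + z ^ 2 := by
  have hzcos : |z * cos t| < 1 := by
    rw [abs_mul]
    exact mul_lt_one_of_nonneg_of_lt_one_left (abs_nonneg z) hz (abs_cos_le_one t)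
  have hsq : (z * cos t) ^ 2 ≤ z ^ 2 := by
    rw [mul_pow]
    exact mul_le_of_le_one_right (sq_nonneg z) (cos_sq_le_one t)
  nlinarith [abs_lt.mp hzcos]

lemma continuous_geomCosSum (hz : |z| < 1) : Continuous (geomCosSum z) :=
  Continuous.div (by fun_prop) (by fun_prop) fun t => (geomCosSum_denom_pos hz t).ne'

lemma hasSum_pow_mul_cos (hz : |z| < 1) (t : ℝ) :
    HasSum (fun k : ℕ => z ^ k * cos (k * t)) (geomCosSum z t) := by
  have hgeom := hasSum_geometric_of_norm_lt_one (ξ := circleMap 0 z t)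
    (by rwa [norm_circleMap_zero])
  convert Complex.hasSum_re hgeom using 1
  · ext k
    rw [circleMap_zero_pow, circleMap_zero_re]
  · have hnormSq : Complex.normSq (1 - circleMap 0 z t) = 1 - 2 * z * cos t + z ^ 2 := by
      rw [Complex.normSq_apply, Complex.sub_re, Complex.sub_im, circleMap_zero_re,
        circleMap_zero_im, Complex.one_re, Complex.one_im]
      linear_combination z ^ 2 * sin_sq_add_cos_sq t
    rw [Complex.inv_re, hnormSq, Complex.sub_re, circleMap_zero_re, Complex.one_re, geomCosSum]

lemma geomCosSum_zero_right (hz : z ≠ 1) : geomCosSum z 0 = (1 - z)⁻¹ := by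
  have : 1 - z ≠ 0 := sub_ne_zero.mpr hz.symm
  rw [geomCosSum, cos_zero, show 1 - 2 * z * 1 + z ^ 2 = (1 - z) * (1 - z) by ring, mul_one,
    div_mul_cancel_left₀ this]

lemma tendsto_geomCosSum_sub_div_sq (hz : |z| < 1) :
    Tendsto (fun t => (geomCosSum z t - geomCosSum z 0) / t ^ 2) (𝓝[≠] 0)
      (𝓝 (-(z * (1 + z) / (2 * (1 - z) ^ 3)))) := by
  have hz1 : 1 - z ≠ 0 := by linarith [abs_lt.mp hz]
  have hdenom : Tendsto (fun t => 1 - 2 * z * cos t + z ^ 2) (𝓝[≠] 0) (𝓝 ((1 - z) ^ 2)) :=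
    (Continuous.tendsto' (by fun_prop) 0 _ (by rw [cos_zero]; ring)).mono_left nhdsWithin_le_nhds
  convert ((tendsto_one_sub_cos_div_sq.div hdenom (pow_ne_zero 2 hz1)).const_mul
    (-(z * (1 + z) / (1 - z)))).congr fun t => ?_ using 2
  · field_simp
  · have hden := (geomCosSum_denom_pos hz t).ne'
    rw [geomCosSum_zero_right (by grind), geomCosSum, Pi.div_apply]
    rcases eq_or_ne t 0 with rfl | ht
    · simp
    generalize hD : 1 - 2 * z * cos t + z ^ 2 = D at hden ⊢
    field_simp
    linear_combination -hD

end GeomCosSum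

section CoefficientExtraction

lemma integral_circleMap_zero_zpow (R : ℝ) (m : ℤ) :
    ∫ t in -π..π, circleMap 0 R t ^ m = if m = 0 then (2 * π : ℂ) else 0 := by
  split_ifs with hm
  · simp only [hm, zpow_zero, intervalIntegral.integral_const, sub_neg_eq_add, Complex.real_smul,
      mul_one]
    push_cast
    ring
  have hmI : (m : ℂ) * Complex.I ≠ 0 := mul_ne_zero (Int.cast_ne_zero.mpr hm) Complex.I_ne_zero
  have hperiod : Complex.exp (m * Complex.I * π) = Complex.exp (m * Complex.I * (-π : ℝ)) :=
    Complex.exp_eq_exp_iff_exists_int.mpr ⟨m, by push_cast; ring⟩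
  have hexp (t : ℝ) :
      circleMap 0 R t ^ m = (R : ℂ) ^ m * Complex.exp (m * Complex.I * t) := by
    rw [circleMap_zero, mul_zpow, ← Complex.exp_int_mul, mul_right_comm, mul_assoc]
  simp only [hexp]
  rw [intervalIntegral.integral_const_mul, integral_exp_mul_complex hmI, hperiod, sub_self,
    zero_div, mul_zero]

lemma prod_zpow_eq_zpow_sum {ι G₀ : Type*} [CommGroupWithZero G₀] {u : G₀} (hu : u ≠ 0)
    (s : Finset ι) (m : ι → ℤ) : ∏ i ∈ s, u ^ m i = u ^ ∑ i ∈ s, m i := by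
  induction s using Finset.cons_induction with
  | empty => simp
  | cons i s hi ih => rw [Finset.prod_cons, Finset.sum_cons, zpow_add₀ hu, ih]

variable {p : ℕ} (P : (Fin p → Bool) → ℝ) (W : (Fin p → Bool) → ℤ)

lemma generatingFunction_pow_mul_zpow_neg {u : ℂ} (hu : u ≠ 0) (n : ℕ) (k : ℤ) :
    (∑ x, (P x : ℂ) * u ^ W x) ^ n * u ^ (-k) =
      ∑ xs : Fin n → Fin p → Bool, ((∏ i, P (xs i) : ℝ) : ℂ) * u ^ (∑ i, W (xs i) - k) := by
  rw [Fintype.sum_pow, Finset.sum_mul]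
  refine Finset.sum_congr rfl fun xs _ => ?_
  rw [Finset.prod_mul_distrib, prod_zpow_eq_zpow_sum hu, sub_eq_add_neg, zpow_add₀ hu, mul_assoc,
    Complex.ofReal_prod]

lemma two_pi_mul_iidProb_sum_eq {R : ℝ} (hR : R ≠ 0) (n : ℕ) (k : ℤ) :
    ((2 * π * iidProb P n {xs | ∑ i, W (xs i) = k} : ℝ) : ℂ) =
      ∫ t in -π..π, (∑ x, (P x : ℂ) * circleMap 0 R t ^ W x) ^ n * circleMap 0 R t ^ (-k) := by
  have hne (t : ℝ) : circleMap 0 R t ≠ 0 := circleMap_ne_center hR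
  simp only [generatingFunction_pow_mul_zpow_neg P W (hne _)]
  rw [intervalIntegral.integral_finsetSum fun xs _ => ?_]
  · simp only [intervalIntegral.integral_const_mul, integral_circleMap_zero_zpow, iidProb,
      Set.mem_ofPred_eq, sub_eq_zero, Complex.ofReal_mul, Complex.ofReal_sum, Finset.mul_sum]
    refine Finset.sum_congr rfl fun xs _ => ?_
    split_ifs <;> push_cast <;> ring
  · refine Continuous.intervalIntegrable (continuous_const.mul ?_) _ _
    exact (continuous_circleMap 0 R).zpow₀ _ fun t => .inl (hne t)

lemma hasSum_iidProb_sum_eq (n : ℕ) :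
    HasSum (fun k : ℕ => iidProb P n {xs | ∑ i, W (xs i) = k})
      (iidProb P n {xs | 0 ≤ ∑ i, W (xs i)}) := by
  refine hasSum_sum fun xs _ => ?_
  simp only [Set.mem_ofPred_eq]
  by_cases hpos : 0 ≤ ∑ i, W (xs i)
  · lift ∑ i, W (xs i) to ℕ using hpos with m
    simpa [eq_comm] using hasSum_ite_eq m (∏ i, P (xs i))
  · have hne (k : ℕ) : ∑ i, W (xs i) ≠ k := by omega
    simp [hpos, hne, hasSum_zero]

end CoefficientExtraction

lemma hasSum_integral_pow_mul_cos {F : ℝ → ℝ} {z : ℝ} (hF : Continuous F) (hz : |z| < 1)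
    (a b : ℝ) :
    HasSum (fun k : ℕ => z ^ k * ∫ t in a..b, F t * cos (k * t))
      (∫ t in a..b, F t * geomCosSum z t) := by
  have hgeom : Summable fun k : ℕ => |z| ^ k := summable_geometric_of_lt_one (abs_nonneg z) hz
  simp only [← intervalIntegral.integral_const_mul]
  refine intervalIntegral.hasSum_integral_of_dominated_convergence
    (fun k t => |F t| * |z| ^ k) (fun k => ?_) (fun k => ?_) ?_ ?_ ?_
  · exact Continuous.aestronglyMeasurable (by fun_prop)
  · refine .of_forall fun t _ => ?_
    rw [norm_eq_abs, abs_mul, abs_mul, abs_pow, mul_left_comm]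
    gcongr
    exact mul_le_of_le_one_right (by positivity) (abs_cos_le_one _)
  · exact .of_forall fun t _ => hgeom.mul_left _
  · simp only [tsum_mul_left]
    exact Continuous.intervalIntegrable (by fun_prop) _ _
  · refine .of_forall fun t _ => ?_
    simpa only [mul_left_comm] using (hasSum_pow_mul_cos hz t).mul_left (F t)

section TiltedWalk

variable {p : ℕ} {P : (Fin p → Bool) → ℝ} {W : (Fin p → Bool) → ℤ} {r μ z : ℝ}

/-- The step `W` has, under the weights `P`, the law of a lazy symmetric `±1` step with moving
probability `μ`, exponentially tilted by `z` and multiplied by the total mass `r`; stated for the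
probability generating function of `W`. -/
def IsTiltedLazyStep (P : (Fin p → Bool) → ℝ) (W : (Fin p → Bool) → ℤ) (r μ z : ℝ) : Prop :=
  ∀ u : ℂ, u ≠ 0 →
    ∑ x, (P x : ℂ) * u ^ W x = r * (1 - μ + μ / 2 * (z * u + (z * u)⁻¹))

namespace IsTiltedLazyStep

lemma sum_mul_circleMap_zpow (h : IsTiltedLazyStep P W r μ z) (hz : z ≠ 0) (t : ℝ) :
    ∑ x, (P x : ℂ) * circleMap 0 z⁻¹ t ^ W x = (r * lazyCharFun μ t : ℝ) := by
  have hzu : (z : ℂ) * circleMap 0 z⁻¹ t = Complex.exp (t * Complex.I) := by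
    rw [circleMap_zero, Complex.ofReal_inv, mul_inv_cancel_left₀ (Complex.ofReal_ne_zero.mpr hz)]
  rw [h _ (circleMap_ne_center (inv_ne_zero hz)), hzu, ← Complex.exp_neg, lazyCharFun]
  push_cast
  rw [Complex.cos, neg_mul]
  ring

lemma two_pi_mul_iidProb_sum_eq (h : IsTiltedLazyStep P W r μ z) (hz : z ≠ 0) (n : ℕ) (k : ℤ) :
    2 * π * iidProb P n {xs | ∑ i, W (xs i) = k} =
      r ^ n * (z ^ k * ∫ t in -π..π, lazyCharFun μ t ^ n * cos (k * t)) := by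
  have hcoef := _root_.two_pi_mul_iidProb_sum_eq P W (inv_ne_zero hz) n k
  simp only [h.sum_mul_circleMap_zpow hz] at hcoef
  have hre := congrArg Complex.reCLM hcoef
  rw [← ContinuousLinearMap.intervalIntegral_comp_comm] at hre
  · simp only [Complex.reCLM_apply, ← Complex.ofReal_pow, Complex.re_ofReal_mul,
      circleMap_zero_zpow, circleMap_zero_re, Complex.ofReal_re] at hre
    rw [hre, ← intervalIntegral.integral_const_mul, ← intervalIntegral.integral_const_mul]
    refine intervalIntegral.integral_congr fun t _ => ?_
    simp only [mul_pow, zpow_neg, inv_zpow, inv_inv, Int.cast_neg, neg_mul, cos_neg]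
    ring
  · refine Continuous.intervalIntegrable (Continuous.mul (by fun_prop) ?_) _ _
    exact (continuous_circleMap 0 z⁻¹).zpow₀ _ fun t => .inl (circleMap_ne_center (inv_ne_zero hz))

lemma two_pi_mul_iidProb_sum_eq_zero (h : IsTiltedLazyStep P W r μ z) (hz : z ≠ 0) (n : ℕ) :
    2 * π * iidProb P n {xs | ∑ i, W (xs i) = 0} =
      r ^ n * ∫ t in -π..π, lazyCharFun μ t ^ n * 1 := by
  simpa using h.two_pi_mul_iidProb_sum_eq hz n 0

lemma two_pi_mul_iidProb_sum_nonneg (h : IsTiltedLazyStep P W r μ z) (hz0 : z ≠ 0) (hz1 : |z| < 1)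
    (n : ℕ) :
    2 * π * iidProb P n {xs | 0 ≤ ∑ i, W (xs i)} =
      r ^ n * ∫ t in -π..π, lazyCharFun μ t ^ n * geomCosSum z t := by
  refine ((hasSum_iidProb_sum_eq P W n).mul_left (2 * π)).unique ?_
  simp only [h.two_pi_mul_iidProb_sum_eq hz0, zpow_natCast, Int.cast_natCast]
  exact (hasSum_integral_pow_mul_cos (by fun_prop) hz1 _ _).mul_left _

end IsTiltedLazyStep

end TiltedWalk

section WalkAsymptotics

lemma tendsto_natCast_mul_one_add_div_mul_one_sub_div_sub_one (a b : ℝ) :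
    Tendsto (fun n : ℕ => (n : ℝ) * ((1 + a / n) * (1 - b / n) - 1)) atTop (𝓝 (a - b)) := by
  have hlim := (tendsto_const_div_atTop_nhds_zero_nat (a * b)).const_sub (a - b)
  rw [sub_zero] at hlim
  refine hlim.congr' ?_
  filter_upwards [eventually_ne_atTop 0] with n hn
  have : (n : ℝ) ≠ 0 := Nat.cast_ne_zero.mpr hn
  field_simp
  ring

lemma sqrt_two_pi_mul_mul_sqrt_two_pi_div {μ : ℝ} (hμ : 0 < μ) (n : ℕ) :
    √(2 * π * μ * n) * √(2 * π / μ) = 2 * π * √n := by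
  have hsq : 2 * π * μ * n * (2 * π / μ) = (2 * π) ^ 2 * n := by field_simp
  rw [← sqrt_mul (by positivity), hsq, sqrt_mul (by positivity), sqrt_sq (by positivity)]

lemma tendsto_div_leading_term_of_two_pi_mul_eq {g : ℝ → ℝ} {prob : ℕ → ℝ} {r μ γ : ℝ}
    (hprob : ∀ n, 2 * π * prob n = r ^ n * ∫ t in -π..π, lazyCharFun μ t ^ n * g t)
    (hr : r ≠ 0) (hμ0 : 0 < μ) (hμ1 : μ < 1) (hg : Continuous g) (hg0 : g 0 ≠ 0)
    (hg2 : Tendsto (fun t => (g t - g 0) / t ^ 2) (𝓝[≠] 0) (𝓝 γ)) :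
    Tendsto (fun n : ℕ => (n : ℝ) * (prob n / (r ^ n / √(2 * π * μ * n) * g 0) - 1)) atTop
      (𝓝 ((1 - 3 * μ) / (8 * μ) + γ / (μ * g 0))) := by
  have hrate : 0 < 2 * μ * (1 - μ) / π ^ 2 := by
    have := sub_pos.mpr hμ1
    positivity
  have hsqrt : √(2 * π / μ) ≠ 0 := by positivity
  have hlaplace := tendsto_laplace_second_order (continuous_lazyCharFun μ) hg pi_pos hrate hμ0
    (fun t ht => abs_lazyCharFun_le_exp hμ0.le hμ1.le (abs_le.mpr ht))
    (tendsto_lazyCharFun_sub_exp_div_pow_four hμ0.ne') hg2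
  convert (hlaplace.div_const (√(2 * π / μ) * g 0)).congr' ?_ using 2
  · field_simp
    ring
  · filter_upwards [eventually_gt_atTop 0] with n hn
    have hscale := sqrt_two_pi_mul_mul_sqrt_two_pi_div hμ0 n
    have : √(2 * π * μ * n) ≠ 0 := by positivity
    have hratio : √n * (∫ t in -π..π, lazyCharFun μ t ^ n * g t) / √(2 * π / μ) =
        prob n * √(2 * π * μ * n) / r ^ n := by
      rw [div_eq_div_iff hsqrt (pow_ne_zero n hr), mul_assoc, mul_assoc, hscale]
      linear_combination -√n * hprob n
    calc (n : ℝ) * (√n * (∫ t in -π..π, lazyCharFun μ t ^ n * g t) - √(2 * π / μ) * g 0) /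
          (√(2 * π / μ) * g 0)
        = n * (√n * (∫ t in -π..π, lazyCharFun μ t ^ n * g t) / √(2 * π / μ) / g 0 - 1) := by
          field_simp
      _ = n * (prob n / (r ^ n / √(2 * π * μ * n) * g 0) - 1) := by
          rw [hratio]
          field_simp

namespace IsTiltedLazyStep

variable {p : ℕ} {P : (Fin p → Bool) → ℝ} {W : (Fin p → Bool) → ℤ} {r μ z : ℝ}

theorem tendsto_iidProb_sum_eq_zero (h : IsTiltedLazyStep P W r μ z) (hr : r ≠ 0) (hμ0 : 0 < μ)
    (hμ1 : μ < 1) (hz : z ≠ 0) :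
    Tendsto (fun n : ℕ => (n : ℝ) * (iidProb P n {xs | ∑ i, W (xs i) = 0} /
      (r ^ n / √(2 * π * μ * n) * (1 + (1 - 3 * μ) / (8 * μ * n))) - 1)) atTop (𝓝 0) := by
  have hlead := tendsto_div_leading_term_of_two_pi_mul_eq (g := fun _ => 1) (γ := 0)
    (h.two_pi_mul_iidProb_sum_eq_zero hz) hr hμ0 hμ1 continuous_const one_ne_zero (by simp)
  have hcorr := tendsto_natCast_mul_one_add_div_mul_one_sub_div_sub_one ((1 - 3 * μ) / (8 * μ)) 0
  simp only [zero_div, sub_zero, mul_one, add_zero] at hlead hcorr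
  simpa only [div_div] using tendsto_natCast_mul_div_sub_one hlead hcorr

theorem tendsto_iidProb_sum_nonneg (h : IsTiltedLazyStep P W r μ z) (hr : r ≠ 0) (hμ0 : 0 < μ)
    (hμ1 : μ < 1) (hz0 : z ≠ 0) (hz1 : |z| < 1) :
    Tendsto (fun n : ℕ => (n : ℝ) * (iidProb P n {xs | 0 ≤ ∑ i, W (xs i)} /
      (r ^ n / √(2 * π * μ * n) * (1 + (1 - 3 * μ) / (8 * μ * n)) / (1 - z) *
        (1 - z * (1 + z) / (2 * (1 - z) ^ 2 * μ * n))) - 1)) atTop (𝓝 0) := by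
  have hz_ne_one : z ≠ 1 := (abs_lt.mp hz1).2.ne
  have hz_sub : 1 - z ≠ 0 := sub_ne_zero.mpr hz_ne_one.symm
  have hzero := geomCosSum_zero_right hz_ne_one
  have hlead := tendsto_div_leading_term_of_two_pi_mul_eq
    (h.two_pi_mul_iidProb_sum_nonneg hz0 hz1) hr hμ0 hμ1 (continuous_geomCosSum hz1)
    (hzero ▸ inv_ne_zero hz_sub) (tendsto_geomCosSum_sub_div_sq hz1)
  have hcoef : -(z * (1 + z) / (2 * (1 - z) ^ 3)) / (μ * (1 - z)⁻¹) =
      -(z * (1 + z) / (2 * (1 - z) ^ 2 * μ)) := by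
    field_simp
  rw [hzero, hcoef, ← sub_eq_add_neg] at hlead
  refine (tendsto_natCast_mul_div_sub_one hlead
    (tendsto_natCast_mul_one_add_div_mul_one_sub_div_sub_one _ _)).congr fun n => ?_
  rw [div_div, div_div, div_div, ← div_eq_mul_inv]
  ring_nf

end IsTiltedLazyStep

end WalkAsymptotics

section Agreement

variable {p n : ℕ} {i j k : Fin p}

/-- The increment, contributed by one sample `x`, of `n * (Ahat i k - Ahat i j)`. -/
def agreementDiff (i j k : Fin p) (x : Fin p → Bool) : ℤ :=
  (if x i = x k then 1 else 0) - (if x i = x j then 1 else 0)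

lemma Ahat_sub_Ahat (xs : Fin n → Fin p → Bool) (i j k : Fin p) :
    Ahat xs i k - Ahat xs i j = (∑ l, agreementDiff i j k (xs l) : ℤ) / n := by
  simp only [Ahat, agreementDiff, Finset.sum_sub_distrib, Finset.sum_boole]
  push_cast
  ring

lemma setOf_Ahat_eq (hn : 0 < n) :
    {xs : Fin n → Fin p → Bool | Ahat xs i k = Ahat xs i j} =
      {xs | ∑ l, agreementDiff i j k (xs l) = 0} := by
  ext xs
  have : (n : ℝ) ≠ 0 := by positivity
  simp only [Set.mem_ofPred_eq]
  rw [← sub_eq_zero, Ahat_sub_Ahat, div_eq_zero_iff, or_iff_left this, Int.cast_eq_zero]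

lemma setOf_Ahat_le (hn : 0 < n) :
    {xs : Fin n → Fin p → Bool | Ahat xs i j ≤ Ahat xs i k} =
      {xs | 0 ≤ ∑ l, agreementDiff i j k (xs l)} := by
  ext xs
  simp only [Set.mem_ofPred_eq]
  rw [← sub_nonneg, Ahat_sub_Ahat, le_div_iff₀ (by positivity), zero_mul, Int.cast_nonneg_iff]

end Agreement

section NoisyChain

lemma sum_fin_succ_fun {α M : Type*} [Fintype α] [AddCommMonoid M] {n : ℕ}
    (f : (Fin (n + 1) → α) → M) : ∑ x, f x = ∑ a, ∑ x, f (Matrix.vecCons a x) := by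
  rw [← (Fin.consEquiv fun _ => α).sum_comp, Fintype.sum_prod_type]
  rfl

lemma sum_fin_three_fun {α M : Type*} [Fintype α] [AddCommMonoid M] (f : (Fin 3 → α) → M) :
    ∑ x, f x = ∑ a, ∑ b, ∑ c, f ![a, b, c] := by
  simp only [sum_fin_succ_fun, Fintype.sum_unique, Subsingleton.elim (default : Fin 0 → α) ![]]

lemma isingP_chainA (θ : ℝ) (x : Fin 3 → Bool) : isingP θ chainA x =
    1 / 2 * ((if x 0 = x 1 then 1 - θ else θ) * (if x 1 = x 2 then 1 - θ else θ)) := by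
  have hedges : chainA.edgeFinset = {s(0, 1), s(1, 2)} := by
    ext e
    rw [SimpleGraph.mem_edgeFinset, chainA, SimpleGraph.edgeSet_fromEdgeSet]
    simp only [Set.mem_sdiff, Set.mem_insert_iff, Set.mem_singleton_iff, Finset.mem_insert,
      Finset.mem_singleton, and_iff_left_iff_imp]
    rintro (rfl | rfl) <;> simp
  rw [isingP, hedges, Finset.prod_insert (by decide), Finset.prod_singleton]
  rfl

lemma hamming_fin_three (a b c a' b' c' : Bool) : hamming ![a, b, c] ![a', b', c'] =
    (if a = a' then 0 else 1) + (if b = b' then 0 else 1) + (if c = c' then 0 else 1) := by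
  simp only [hamming, ne_eq, Finset.card_filter, ite_not, Fin.sum_univ_three, Matrix.cons_val_zero,
    Matrix.cons_val_one, Matrix.cons_val]
  congr

lemma sum_noisy_isingP_chainA_mul_zpow (θ q : ℝ) (u : ℂ) :
    ∑ x, (noisy q (isingP θ chainA) x : ℂ) * u ^ agreementDiff 0 1 2 x =
      1 - 2 * beta1 θ q - 2 * beta2 θ q + 2 * beta1 θ q * u⁻¹ + 2 * beta2 θ q * u := by
  rw [sum_fin_three_fun]
  simp only [noisy, sum_fin_three_fun, hamming_fin_three, isingP_chainA, Fintype.sum_bool,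
    agreementDiff, beta1, beta2]
  simp only [↓reduceIte, add_zero, pow_zero, tsub_zero, one_mul, one_div, Matrix.cons_val_zero,
    Matrix.cons_val_one, Matrix.cons_val, Bool.false_eq_true, zero_add, pow_one,
    Nat.add_one_sub_one, Bool.true_eq_false, Nat.reduceAdd, Nat.reduceSub, tsub_self, mul_one,
    Complex.ofReal_add, Complex.ofReal_mul, Complex.ofReal_pow, Complex.ofReal_sub,
    Complex.ofReal_one, Complex.ofReal_inv, Complex.ofReal_ofNat, Complex.ofReal_div, sub_self,
    zpow_ofNat, zero_sub, Int.reduceNeg, zpow_neg]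
  ring

variable {θ q : ℝ}

lemma beta2_pos (hθ0 : 0 < θ) (hθ1 : θ ≤ 1) (hq0 : 0 ≤ q) (hq1 : q ≤ 1) : 0 < beta2 θ q := by
  have : 0 ≤ 1 - q := sub_nonneg.mpr hq1
  have hcube : 0 < (1 - q) ^ 3 + q ^ 3 := by nlinarith [sq_nonneg (1 - 2 * q)]
  have : 0 ≤ 1 - θ ^ 2 := sub_nonneg.mpr (pow_le_one₀ hθ0.le hθ1)
  unfold beta2
  positivity

lemma beta2_lt_beta1 (hθ0 : 0 < θ) (hθ1 : θ < 1 / 2) (hq : q ≠ 1 / 2) :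
    beta2 θ q < beta1 θ q := by
  have hdiff : beta1 θ q - beta2 θ q = θ * (1 - 2 * θ) / 2 * (1 - 2 * q) ^ 2 := by
    unfold beta1 beta2
    ring
  have : 0 < 1 - 2 * θ := by linarith
  have : 1 - 2 * q ≠ 0 := by grind
  rw [← sub_pos, hdiff]
  positivity

lemma two_mul_beta1_add_two_mul_beta2_lt_one (hθ : θ ≤ 1 / 2) (q : ℝ) :
    2 * beta1 θ q + 2 * beta2 θ q < 1 := by
  have hsum : 2 * beta1 θ q + 2 * beta2 θ q = 1 / 2 - (1 / 2 - θ) * (1 - 2 * q) ^ 2 := by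
    unfold beta1 beta2
    ring
  nlinarith [mul_nonneg (sub_nonneg.mpr hθ) (sq_nonneg (1 - 2 * q))]

lemma exp_neg_Kq (hβ : 2 * beta1 θ q + 2 * beta2 θ q < 1) :
    exp (-Kq θ q) = 1 - 2 * beta1 θ q - 2 * beta2 θ q + 4 * √(beta1 θ q * beta2 θ q) := by
  rw [Kq, neg_neg, exp_log (by linarith [sqrt_nonneg (beta1 θ q * beta2 θ q)])]
  ring

lemma exp_neg_Kq_mul_mu2 (θ q : ℝ) :
    exp (-Kq θ q) * mu2 θ q = 4 * √(beta1 θ q * beta2 θ q) := by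
  rw [mu2, mul_comm, mul_assoc, ← exp_add, add_neg_cancel, exp_zero, mul_one]

lemma mu2_pos (hβ1 : 0 < beta1 θ q) (hβ2 : 0 < beta2 θ q) : 0 < mu2 θ q := by
  unfold mu2
  positivity

lemma mu2_lt_one (hβ : 2 * beta1 θ q + 2 * beta2 θ q < 1) : mu2 θ q < 1 := by
  refine lt_of_mul_lt_mul_left ?_ (exp_pos (-Kq θ q)).le
  rw [exp_neg_Kq_mul_mu2, mul_one, exp_neg_Kq hβ]
  linarith

lemma zq_pos (hβ1 : 0 < beta1 θ q) (hβ2 : 0 < beta2 θ q) : 0 < zq θ q :=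
  sqrt_pos.mpr (div_pos hβ2 hβ1)

lemma zq_lt_one (hβ1 : 0 < beta1 θ q) (hlt : beta2 θ q < beta1 θ q) : zq θ q < 1 := by
  rwa [zq, sqrt_lt' one_pos, one_pow, div_lt_one hβ1]

lemma beta1_mul_zq (hβ1 : 0 < beta1 θ q) : beta1 θ q * zq θ q = √(beta1 θ q * beta2 θ q) := by
  rw [zq, sqrt_div' _ hβ1.le, sqrt_mul hβ1.le, mul_div_left_comm, div_sqrt, mul_comm]

lemma sqrt_beta1_mul_beta2_mul_zq (hβ1 : 0 < beta1 θ q) (hβ2 : 0 ≤ beta2 θ q) :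
    √(beta1 θ q * beta2 θ q) * zq θ q = beta2 θ q := by
  have hsq : beta1 θ q * beta2 θ q * (beta2 θ q / beta1 θ q) = beta2 θ q ^ 2 := by field_simp
  rw [zq, ← sqrt_mul (by positivity), hsq, sqrt_sq hβ2]

lemma isTiltedLazyStep_noisy_isingP_chainA (hβ1 : 0 < beta1 θ q) (hβ2 : 0 < beta2 θ q)
    (hβ : 2 * beta1 θ q + 2 * beta2 θ q < 1) :
    IsTiltedLazyStep (noisy q (isingP θ chainA)) (agreementDiff 0 1 2) (exp (-Kq θ q)) (mu2 θ q)
      (zq θ q) := by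
  intro u _
  have hz : (zq θ q : ℂ) ≠ 0 := Complex.ofReal_ne_zero.mpr (zq_pos hβ1 hβ2).ne'
  have hexp := congrArg Complex.ofReal (exp_neg_Kq hβ)
  have hmu := congrArg Complex.ofReal (exp_neg_Kq_mul_mu2 θ q)
  have hdown := congrArg Complex.ofReal (beta1_mul_zq hβ1)
  have hup := congrArg Complex.ofReal (sqrt_beta1_mul_beta2_mul_zq hβ1 hβ2.le)
  simp only [Complex.ofReal_mul, Complex.ofReal_add, Complex.ofReal_sub, Complex.ofReal_one,
    Complex.ofReal_ofNat] at hexp hmu hdown hup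
  rw [← eq_mul_inv_iff_mul_eq₀ hz] at hdown
  rw [sum_noisy_isingP_chainA_mul_zpow, mul_inv]
  linear_combination -hexp + (1 - (zq θ q * u + (zq θ q : ℂ)⁻¹ * u⁻¹) / 2) * hmu - 2 * u * hup +
    2 * u⁻¹ * hdown

end NoisyChain

end

theorem stmt18_general {θ q : ℝ} (hθ0 : 0 < θ) (hθ1 : θ < 1 / 2) (hq0 : 0 ≤ q) (hq1 : q ≤ 1)
    (hq : q ≠ 1 / 2) :
    Tendsto (fun n : ℕ => (n : ℝ) * (iidProb (noisy q (isingP θ chainA)) n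
      {ys | Ahat ys 0 2 = Ahat ys 0 1} / ftildeq θ q n - 1)) atTop (nhds 0) ∧
    Tendsto (fun n : ℕ => (n : ℝ) * (iidProb (noisy q (isingP θ chainA)) n
      {ys | Ahat ys 0 1 ≤ Ahat ys 0 2} / fnq θ q n - 1)) atTop (nhds 0) := by
  have hβ2 : 0 < beta2 θ q := beta2_pos hθ0 (by linarith) hq0 hq1
  have hlt : beta2 θ q < beta1 θ q := beta2_lt_beta1 hθ0 hθ1 hq
  have hβ1 : 0 < beta1 θ q := hβ2.trans hlt
  have hβ := two_mul_beta1_add_two_mul_beta2_lt_one hθ1.le q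
  have hstep := isTiltedLazyStep_noisy_isingP_chainA hβ1 hβ2 hβ
  have hr := (Real.exp_pos (-Kq θ q)).ne'
  have hμ0 := mu2_pos hβ1 hβ2
  have hμ1 := mu2_lt_one hβ
  have hz0 := zq_pos hβ1 hβ2
  have hz1 : |zq θ q| < 1 := (abs_of_pos hz0).trans_lt (zq_lt_one hβ1 hlt)
  have hexp (n : ℕ) : Real.exp (-(n : ℝ) * Kq θ q) = Real.exp (-Kq θ q) ^ n := by
    rw [← Real.exp_nat_mul, neg_mul_comm]
  constructor
  · refine (hstep.tendsto_iidProb_sum_eq_zero hr hμ0 hμ1 hz0.ne').congr' ?_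
    filter_upwards [eventually_gt_atTop 0] with n hn
    rw [setOf_Ahat_eq hn, ftildeq, hexp]
  · refine (hstep.tendsto_iidProb_sum_nonneg hr hμ0 hμ1 hz0.ne' hz1).congr' ?_
    filter_upwards [eventually_gt_atTop 0] with n hn
    rw [setOf_Ahat_le hn, fnq, ftildeq, hexp]

/-- exact asymptotics for the tie and crossover probabilities with noisy
samples: `ℙ(Â^{(q)}_{1,3} = Â^{(q)}_{1,2}) = f̃^{(q)}(n)(1 + o(n⁻¹))` and
`ℙ(Â^{(q)}_{1,3} ≥ Â^{(q)}_{1,2}) = f^{(q)}(n)(1 + o(n⁻¹))`. -/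
theorem stmt18 (θ q : ℝ) (hθ0 : 0 < θ) (hθ1 : θ < 1 / 2) (hq0 : 0 ≤ q) (hq1 : q < 1 / 2) :
    Filter.Tendsto (fun n : ℕ =>
      (n : ℝ) * (iidProb (noisy q (isingP θ chainA)) n
        {ys | Ahat ys 0 2 = Ahat ys 0 1} / ftildeq θ q n - 1))
      Filter.atTop (nhds 0) ∧
    Filter.Tendsto (fun n : ℕ =>
      (n : ℝ) * (iidProb (noisy q (isingP θ chainA)) n
        {ys | Ahat ys 0 1 ≤ Ahat ys 0 2} / fnq θ q n - 1))
      Filter.atTop (nhds 0) := by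
  exact stmt18_general hθ0 hθ1 hq0 (by linarith) hq1.ne
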